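/- Let a > 0 and b ≥ 1, and let P be an (a,b)-standard probability measure on ℝ^D with compact support 𝒳. Then there exists a constant C, depending only on a and b, such that for every integer n ≥ 2, if X_1, …, X_n are independent random points drawn from P, then E[d_H(𝒳, {X_1, …, X_n})] ≤ C (log(n) / n)^{1/b}. -/

import Mathlib

/-!
Let `r > 0` with `a * r ^ b ≤ 1`. A maximal `r`-separated subset `S` of `𝒳` is an `r`-cover of `𝒳`,
and since the balls of radius `r / 2` around its points are disjoint, `S` has at most
`2 ^ b / (a * r ^ b)` points. If every ball of radius `r` around a point of `S` contains a sample
point, then `d_H(𝒳, {X_1, …, X_n}) ≤ 2 * r`; each of these balls is missed with probability at most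
`exp (-n * a * r ^ b)`. As the diameter of `𝒳` is at most `2 * a ^ (-1 / b)`, the expectation is at
most `2 * r + 2 * a ^ (-1 / b) * (2 ^ b / (a * r ^ b)) * exp (-n * a * r ^ b)`, and for larger `r`
already the diameter is at most `2 * r`. The choice `a * r ^ b = (1 + 1 / b) * log n / n` makes both
terms `O((log n / n) ^ (1 / b))`.
-/

open MeasureTheory Metric Bornology
open scoped ENNReal NNReal

section Integral

variable {α : Type*} [MeasurableSpace α]

lemma lintegral_le_const_add_mul_measure (μ : Measure α) {f : α → ℝ≥0∞} {B : Set α} {s M : ℝ≥0∞}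
    (hM : ∀ᵐ x ∂μ, f x ≤ M) (hs : ∀ᵐ x ∂μ, x ∉ B → f x ≤ s) :
    ∫⁻ x, f x ∂μ ≤ s * μ Set.univ + M * μ B := by
  calc ∫⁻ x, f x ∂μ ≤ ∫⁻ x, (s + B.indicator (fun _ ↦ M) x) ∂μ := by
        refine lintegral_mono_ae ?_
        filter_upwards [hM, hs] with x hxM hxs
        by_cases hxB : x ∈ B
        · simpa only [Set.indicator_of_mem hxB] using hxM.trans le_add_self
        · simpa only [Set.indicator_of_notMem hxB, add_zero] using hxs hxB
    _ = s * μ Set.univ + ∫⁻ x, B.indicator (fun _ ↦ M) x ∂μ := by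
        rw [lintegral_add_left measurable_const, lintegral_const]
    _ ≤ s * μ Set.univ + M * μ B := by
        gcongr
        exact lintegral_indicator_const_le B M

end Integral

section IndependentSample

variable {α ι κ : Type*} [MeasurableSpace α] [Fintype ι]

lemma ae_pi_forall_mem {P : Measure α} [SigmaFinite P] {X : Set α} (hPX : ∀ᵐ z ∂P, z ∈ X) :
    ∀ᵐ x ∂Measure.pi (fun _ : ι ↦ P), ∀ i, x i ∈ X :=
  ae_all_iff.2 fun _ ↦ Measure.tendsto_eval_ae_ae.eventually hPX

lemma pi_forall_notMem_le_exp (P : Measure α) [IsProbabilityMeasure P] {s : Set α}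
    (hs : MeasurableSet s) :
    Measure.pi (fun _ : ι ↦ P) {x | ∀ i, x i ∉ s} ≤
      ENNReal.ofReal (Real.exp (-(Fintype.card ι * P.real s))) := by
  have hmiss : P sᶜ ≤ ENNReal.ofReal (Real.exp (-P.real s)) := by
    rw [← ofReal_measureReal, probReal_compl_eq_one_sub hs]
    exact ENNReal.ofReal_le_ofReal (Real.one_sub_le_exp_neg _)
  calc Measure.pi (fun _ : ι ↦ P) {x | ∀ i, x i ∉ s}
      = Measure.pi (fun _ : ι ↦ P) (Set.univ.pi fun _ ↦ sᶜ) := by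
        congr 1
        ext
        simp
    _ = P sᶜ ^ Fintype.card ι := by
        rw [Measure.pi_pi, Finset.prod_const, Finset.card_univ]
    _ ≤ ENNReal.ofReal (Real.exp (-P.real s)) ^ Fintype.card ι := by gcongr
    _ = ENNReal.ofReal (Real.exp (-(Fintype.card ι * P.real s))) := by
        rw [← ENNReal.ofReal_pow (Real.exp_pos _).le, ← Real.exp_nat_mul, mul_neg]

lemma pi_exists_forall_notMem_le (P : Measure α) [IsProbabilityMeasure P] (S : Finset κ)
    {s : κ → Set α} (hs : ∀ c ∈ S, MeasurableSet (s c)) {p : ℝ} (hp : ∀ c ∈ S, p ≤ P.real (s c)) :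
    Measure.pi (fun _ : ι ↦ P) {x | ∃ c ∈ S, ∀ i, x i ∉ s c} ≤
      ENNReal.ofReal (S.card * Real.exp (-(Fintype.card ι * p))) := by
  calc Measure.pi (fun _ : ι ↦ P) {x | ∃ c ∈ S, ∀ i, x i ∉ s c}
      = Measure.pi (fun _ : ι ↦ P) (⋃ c ∈ S, {x | ∀ i, x i ∉ s c}) := by
        congr 1
        ext
        simp
    _ ≤ ∑ c ∈ S, Measure.pi (fun _ : ι ↦ P) {x | ∀ i, x i ∉ s c} :=
        measure_biUnion_finset_le _ _
    _ ≤ ∑ _c ∈ S, ENNReal.ofReal (Real.exp (-(Fintype.card ι * p))) := by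
        refine Finset.sum_le_sum fun c hc ↦ (pi_forall_notMem_le_exp P (hs c hc)).trans ?_
        gcongr
        exact hp c hc
    _ = ENNReal.ofReal (S.card * Real.exp (-(Fintype.card ι * p))) := by
        rw [Finset.sum_const, nsmul_eq_mul, ENNReal.ofReal_mul (Nat.cast_nonneg _),
          ENNReal.ofReal_natCast]

end IndependentSample

section HausdorffDistance

variable {E ι : Type*} [PseudoMetricSpace E] {X : Set E} {x : ι → E}

lemma hausdorffDist_range_le_diam [Nonempty ι] (hX : IsBounded X) (hx : ∀ i, x i ∈ X) :
    hausdorffDist X (Set.range x) ≤ diam X := by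
  have hsub : Set.range x ⊆ X := Set.range_subset_iff.2 hx
  have hne : (Set.range x).Nonempty := Set.range_nonempty x
  simpa only [Set.union_eq_left.2 hsub] using
    hausdorffDist_le_diam (hne.mono hsub) hX hne (hX.subset hsub)

lemma hausdorffDist_range_le_of_isCover {S : Set E} {r s : ℝ≥0} (hS : IsCover r X S)
    (hx : ∀ i, x i ∈ X) (hit : ∀ c ∈ S, ∃ i, dist (x i) c ≤ s) :
    hausdorffDist X (Set.range x) ≤ r + s := by
  refine hausdorffDist_le_of_mem_dist (by positivity) (fun y hy ↦ ?_) ?_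
  · obtain ⟨c, hc, hyc⟩ := hS hy
    obtain ⟨i, hi⟩ := hit c hc
    have hyc : dist y c ≤ r := by rwa [dist_nndist, NNReal.coe_le_coe, ← edist_le_coe]
    exact ⟨x i, Set.mem_range_self i, (dist_triangle_right y (x i) c).trans (add_le_add hyc hi)⟩
  · rintro _ ⟨i, rfl⟩
    exact ⟨x i, hx i, by rw [dist_self]; positivity⟩

end HausdorffDistance

section BallMass

variable {E : Type*} [PseudoMetricSpace E] [MeasurableSpace E] [OpensMeasurableSpace E]
  {X : Set E}

lemma encard_mul_le_measure_univ_of_isSeparated (μ : Measure E) {C : Set E} {ε : ℝ≥0} {m : ℝ≥0∞}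
    (hC : IsSeparated ε C) (hm : ∀ c ∈ C, m ≤ μ (ball c (ε / 2))) :
    (C.encard : ℝ≥0∞) * m ≤ μ Set.univ := by
  have hdisj : Pairwise (Function.onFun Disjoint fun c : C ↦ ball (c : E) (ε / 2)) := by
    refine fun c d hcd ↦ ball_disjoint_ball ?_
    have hlt : (ε : ℝ≥0∞) < edist (c : E) d := hC c.2 d.2 (Subtype.coe_injective.ne hcd)
    rw [edist_nndist, ENNReal.coe_lt_coe, ← NNReal.coe_lt_coe, coe_nndist] at hlt
    simpa only [add_halves] using hlt.le
  calc (C.encard : ℝ≥0∞) * m = ∑' _ : C, m := (ENNReal.tsum_set_const C m).symm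
    _ ≤ ∑' c : C, μ (ball c (ε / 2)) := ENNReal.tsum_le_tsum fun c ↦ hm c c.2
    _ ≤ μ (⋃ c : C, ball c (ε / 2)) :=
        tsum_meas_le_meas_iUnion_of_disjoint μ (fun _ ↦ measurableSet_ball) hdisj
    _ ≤ μ Set.univ := measure_mono (Set.subset_univ _)

lemma packingNumber_le_measure_univ_div (μ : Measure E) {ε : ℝ≥0} {m : ℝ≥0∞} (hm₀ : m ≠ 0)
    (hm_top : m ≠ ∞) (hm : ∀ x ∈ X, m ≤ μ (ball x (ε / 2))) :
    (packingNumber ε X : ℝ≥0∞) ≤ μ Set.univ / m := by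
  rw [← ENat.le_floor]
  refine iSup₂_le fun C hCX ↦ iSup_le fun hC ↦ ENat.le_floor.2 ?_
  rw [ENNReal.le_div_iff_mul_le (.inl hm₀) (.inl hm_top)]
  exact encard_mul_le_measure_univ_of_isSeparated μ hC fun c hc ↦ hm c (hCX hc)

lemma exists_finset_isCover_card_le_inv (P : Measure E) [IsProbabilityMeasure P] {ε : ℝ≥0} {q : ℝ}
    (hq : 0 < q) (hP : ∀ x ∈ X, q ≤ P.real (ball x (ε / 2))) :
    ∃ S : Finset E, ↑S ⊆ X ∧ IsCover ε X (S : Set E) ∧ (S.card : ℝ) ≤ q⁻¹ := by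
  have hpack : (packingNumber ε X : ℝ≥0∞) ≤ ENNReal.ofReal q⁻¹ := by
    rw [ENNReal.ofReal_inv_of_pos hq, ← one_div, ← measure_univ (μ := P)]
    refine packingNumber_le_measure_univ_div P (by simpa using hq) ENNReal.ofReal_ne_top ?_
    exact fun x hx ↦ (ENNReal.ofReal_le_iff_le_toReal (measure_ne_top _ _)).2 (hP x hx)
  have hfin : packingNumber ε X ≠ ⊤ := by
    intro h
    simp [h] at hpack
  have hcard := encard_maximalSeparatedSet hfin
  obtain ⟨S, hS⟩ := (Set.encard_ne_top_iff.1 (hcard ▸ hfin)).exists_finset_coe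
  refine ⟨S, hS ▸ maximalSeparatedSet_subset, hS ▸ isCover_maximalSeparatedSet hfin, ?_⟩
  rw [← hcard, ← hS, Set.encard_coe_eq_coe_finsetCard, ENat.toENNReal_coe] at hpack
  rwa [← ENNReal.ofReal_natCast, ENNReal.ofReal_le_ofReal_iff (by positivity)] at hpack

lemma dist_lt_add_of_one_le_measure_ball {P : Measure E} [IsProbabilityMeasure P] {x y : E}
    {r s : ℝ} (hx : 1 ≤ P (ball x r)) (hy : 1 ≤ P (ball y s)) :
    dist x y < r + s := by
  have hx' : ∀ᵐ z ∂P, z ∈ ball x r :=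
    (mem_ae_iff_prob_eq_one measurableSet_ball).2 (prob_le_one.antisymm hx)
  have hy' : ∀ᵐ z ∂P, z ∈ ball y s :=
    (mem_ae_iff_prob_eq_one measurableSet_ball).2 (prob_le_one.antisymm hy)
  obtain ⟨z, hzx, hzy⟩ := (hx'.and hy').exists
  exact (dist_triangle_left x y z).trans_lt (add_lt_add hzx hzy)

end BallMass

section ExpectedDistance

variable {E ι : Type*} [PseudoMetricSpace E] [MeasurableSpace E] [Fintype ι]
  [Nonempty ι] {P : Measure E} [IsProbabilityMeasure P] {X : Set E}

lemma ae_hausdorffDist_range_le_diam (hPX : ∀ᵐ z ∂P, z ∈ X) (hX : IsBounded X) :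
    ∀ᵐ x ∂Measure.pi (fun _ : ι ↦ P),
      ENNReal.ofReal (hausdorffDist X (Set.range x)) ≤ ENNReal.ofReal (diam X) := by
  filter_upwards [ae_pi_forall_mem hPX] with x hx
  exact ENNReal.ofReal_le_ofReal (hausdorffDist_range_le_diam hX hx)

lemma lintegral_hausdorffDist_range_le_diam (hPX : ∀ᵐ z ∂P, z ∈ X) (hX : IsBounded X) :
    ∫⁻ x, ENNReal.ofReal (hausdorffDist X (Set.range x)) ∂Measure.pi (fun _ : ι ↦ P) ≤
      ENNReal.ofReal (diam X) := by
  calc ∫⁻ x, ENNReal.ofReal (hausdorffDist X (Set.range x)) ∂Measure.pi (fun _ : ι ↦ P)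
      ≤ ∫⁻ _, ENNReal.ofReal (diam X) ∂Measure.pi (fun _ : ι ↦ P) :=
        lintegral_mono_ae (ae_hausdorffDist_range_le_diam hPX hX)
    _ = ENNReal.ofReal (diam X) := by rw [lintegral_const, measure_univ, mul_one]

lemma lintegral_hausdorffDist_range_le_of_le_measureReal_ball [OpensMeasurableSpace E]
    (hPX : ∀ᵐ z ∂P, z ∈ X) {r : ℝ≥0} {p q : ℝ} (hp : ∀ x ∈ X, p ≤ P.real (ball x r))
    (hq : 0 < q) (hP : ∀ x ∈ X, q ≤ P.real (ball x (r / 2))) :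
    ∫⁻ x, ENNReal.ofReal (hausdorffDist X (Set.range x)) ∂Measure.pi (fun _ : ι ↦ P) ≤
      ENNReal.ofReal (2 * r + diam X * (q⁻¹ * Real.exp (-(Fintype.card ι * p)))) := by
  obtain ⟨S, hSX, hS, hcard⟩ := exists_finset_isCover_card_le_inv P hq hP
  have hX : IsBounded X := ((isBounded_biUnion S.finite_toSet).2 fun _ _ ↦
    isBounded_closedBall).subset (isCover_iff_subset_iUnion_closedBall.1 hS)
  set miss : Set (ι → E) := {x | ∃ c ∈ S, ∀ i, x i ∉ ball c r} with hmiss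
  have hmiss_le : Measure.pi (fun _ : ι ↦ P) miss ≤
      ENNReal.ofReal (q⁻¹ * Real.exp (-(Fintype.card ι * p))) := by
    refine (pi_exists_forall_notMem_le P S (fun _ _ ↦ measurableSet_ball)
      fun c hc ↦ hp c (hSX hc)).trans ?_
    gcongr
  have hdiam := ae_hausdorffDist_range_le_diam (ι := ι) hPX hX
  have hcover : ∀ᵐ x ∂Measure.pi (fun _ : ι ↦ P), x ∉ miss →
      ENNReal.ofReal (hausdorffDist X (Set.range x)) ≤ ENNReal.ofReal (2 * r) := by
    filter_upwards [ae_pi_forall_mem hPX] with x hx hxmiss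
    have hit : ∀ c ∈ S, ∃ i, dist (x i) c ≤ r := by
      simp only [hmiss, Set.mem_ofPred_eq, not_exists, not_and, not_forall, not_not] at hxmiss
      exact fun c hc ↦ (hxmiss c hc).imp fun _ hi ↦ (mem_ball.1 hi).le
    rw [two_mul]
    exact ENNReal.ofReal_le_ofReal (hausdorffDist_range_le_of_isCover hS hx hit)
  calc ∫⁻ x, ENNReal.ofReal (hausdorffDist X (Set.range x)) ∂Measure.pi (fun _ : ι ↦ P)
      ≤ ENNReal.ofReal (2 * r) * Measure.pi (fun _ : ι ↦ P) Set.univ +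
          ENNReal.ofReal (diam X) * Measure.pi (fun _ : ι ↦ P) miss :=
        lintegral_le_const_add_mul_measure _ hdiam hcover
    _ ≤ ENNReal.ofReal (2 * r) +
          ENNReal.ofReal (diam X) * ENNReal.ofReal (q⁻¹ * Real.exp (-(Fintype.card ι * p))) := by
        rw [measure_univ, mul_one]
        gcongr
    _ = ENNReal.ofReal (2 * r + diam X * (q⁻¹ * Real.exp (-(Fintype.card ι * p)))) := by
        rw [← ENNReal.ofReal_mul diam_nonneg,
          ← ENNReal.ofReal_add (by positivity) (mul_nonneg diam_nonneg (by positivity))]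

end ExpectedDistance

lemma mul_div_rpow_inv_rpow {a b c : ℝ} (ha : 0 < a) (hb : b ≠ 0) (hc : 0 ≤ c) :
    a * ((c / a) ^ b⁻¹) ^ b = c := by
  rw [Real.rpow_inv_rpow (by positivity) hb, mul_div_cancel₀ c ha.ne']

section Standard

variable {E ι : Type*} [PseudoMetricSpace E] [MeasurableSpace E]

/-- The lower mass bound in the definition of an `(a, b)`-standard measure: every open ball of
radius `t` with center in `X` has mass at least `min 1 (a * t ^ b)`. That `X` carries `P` is not
part of this predicate. -/
def IsStandardOn (P : Measure E) (X : Set E) (a b : ℝ) : Prop :=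
  ∀ x ∈ X, ∀ t : ℝ, 0 < t → ENNReal.ofReal (min 1 (a * t ^ b)) ≤ P (ball x t)

namespace IsStandardOn

variable {P : Measure E} [IsProbabilityMeasure P] {X : Set E} {a b : ℝ}

lemma le_measureReal_ball (h : IsStandardOn P X a b) {x : E} (hx : x ∈ X) {t : ℝ} (ht : 0 < t)
    (hat : a * t ^ b ≤ 1) : a * t ^ b ≤ P.real (ball x t) := by
  have := h x hx t ht
  rwa [min_eq_right hat, ENNReal.ofReal_le_iff_le_toReal (measure_ne_top _ _)] at this

variable [OpensMeasurableSpace E]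

lemma dist_le (h : IsStandardOn P X a b) (ha : 0 < a) (hb : b ≠ 0) {x y : E} (hx : x ∈ X)
    (hy : y ∈ X) : dist x y ≤ 2 * a⁻¹ ^ b⁻¹ := by
  have hfull : ∀ z ∈ X, 1 ≤ P (ball z (a⁻¹ ^ b⁻¹)) := by
    intro z hz
    have hmass : a * (a⁻¹ ^ b⁻¹) ^ b = 1 := by
      simpa only [one_div] using mul_div_rpow_inv_rpow ha hb zero_le_one
    simpa only [hmass, min_self, ENNReal.ofReal_one] using h z hz (a⁻¹ ^ b⁻¹) (by positivity)
  rw [two_mul]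
  exact (dist_lt_add_of_one_le_measure_ball (hfull x hx) (hfull y hy)).le

lemma isBounded (h : IsStandardOn P X a b) (ha : 0 < a) (hb : b ≠ 0) : IsBounded X :=
  isBounded_iff.2 ⟨_, fun _ hx _ hy ↦ h.dist_le ha hb hx hy⟩

lemma diam_le (h : IsStandardOn P X a b) (ha : 0 < a) (hb : b ≠ 0) :
    diam X ≤ 2 * a⁻¹ ^ b⁻¹ :=
  diam_le_of_forall_dist_le (by positivity) fun _ hx _ hy ↦ h.dist_le ha hb hx hy

theorem lintegral_hausdorffDist_range_le [Fintype ι] [Nonempty ι] (h : IsStandardOn P X a b)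
    (ha : 0 < a) (hb : 0 < b) (hPX : ∀ᵐ z ∂P, z ∈ X) {r : ℝ} (hr : 0 < r) :
    ∫⁻ x, ENNReal.ofReal (hausdorffDist X (Set.range x)) ∂Measure.pi (fun _ : ι ↦ P) ≤
      ENNReal.ofReal (2 * r + 2 * a⁻¹ ^ b⁻¹ *
        (2 ^ b / (a * r ^ b) * Real.exp (-(Fintype.card ι * (a * r ^ b))))) := by
  have hdiam : diam X ≤ 2 * a⁻¹ ^ b⁻¹ := h.diam_le ha hb.ne'
  rcases le_or_gt (a * r ^ b) 1 with hsmall | hlarge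
  · lift r to ℝ≥0 using hr.le
    have hhalf : a * (r / 2 : ℝ) ^ b = (2 ^ b / (a * r ^ b))⁻¹ := by
      rw [Real.div_rpow r.coe_nonneg zero_le_two, inv_div, mul_div_assoc]
    have hhalf_le : a * (r / 2 : ℝ) ^ b ≤ 1 := by
      refine le_trans ?_ hsmall
      gcongr
      exact half_le_self r.coe_nonneg
    refine (lintegral_hausdorffDist_range_le_of_le_measureReal_ball hPX
      (fun x hx ↦ h.le_measureReal_ball hx hr hsmall) (q := a * (r / 2 : ℝ) ^ b) (by positivity)
      (fun x hx ↦ h.le_measureReal_ball hx (half_pos hr) hhalf_le)).trans ?_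
    rw [hhalf, inv_inv]
    gcongr
  · have hr_large : a⁻¹ ^ b⁻¹ ≤ r := by
      rw [Real.rpow_inv_le_iff_of_pos (by positivity) hr.le hb]
      exact (inv_le_iff_one_le_mul₀' ha).2 hlarge.le
    refine (lintegral_hausdorffDist_range_le_diam hPX (h.isBounded ha hb.ne')).trans
      (ENNReal.ofReal_le_ofReal ?_)
    calc diam X ≤ 2 * r := hdiam.trans (by gcongr)
      _ ≤ _ := le_add_of_nonneg_right (by positivity)

end IsStandardOn

end Standard

section Rate

lemma exp_neg_mul_log_div_log_div {x : ℝ} (hx : 1 < x) (c : ℝ) :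
    Real.exp (-((1 + c) * Real.log x)) / (Real.log x / x) =
      Real.log x ^ (-(1 + c)) * (Real.log x / x) ^ c := by
  have hx₀ : 0 < x := one_pos.trans hx
  have hlog : 0 < Real.log x := Real.log_pos hx
  rw [mul_comm (1 + c), ← mul_neg, ← Real.rpow_def_of_pos hx₀, Real.div_rpow hlog.le hx₀.le,
    Real.rpow_neg hx₀.le, Real.rpow_neg hlog.le, Real.rpow_add hx₀, Real.rpow_add hlog,
    Real.rpow_one, Real.rpow_one]
  field_simp

lemma exp_neg_mul_log_div_log_div_le {x₀ x c : ℝ} (hx₀ : 1 < x₀) (hx : x₀ ≤ x) (hc : 0 ≤ 1 + c) :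
    Real.exp (-(x * ((1 + c) * (Real.log x / x)))) / (Real.log x / x) ≤
      Real.log x₀ ^ (-(1 + c)) * (Real.log x / x) ^ c := by
  have hx_one : 1 < x := hx₀.trans_le hx
  have hx_pos : 0 < x := one_pos.trans hx_one
  have hbase : 0 ≤ Real.log x / x := div_nonneg (Real.log_nonneg hx_one.le) hx_pos.le
  rw [mul_left_comm, mul_div_cancel₀ _ hx_pos.ne', exp_neg_mul_log_div_log_div hx_one]
  exact mul_le_mul_of_nonneg_right (Real.rpow_le_rpow_of_nonpos (Real.log_pos hx₀)
    (Real.log_le_log (one_pos.trans hx₀) hx) (neg_nonpos.2 hc)) (Real.rpow_nonneg hbase c)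

end Rate

theorem expected_hausdorff_bound_general {a b : ℝ} (ha : 0 < a) (hb : 0 < b) :
    ∃ C : ℝ, ∀ (E : Type*) [PseudoMetricSpace E] [MeasurableSpace E] [OpensMeasurableSpace E]
      (P : Measure E) [IsProbabilityMeasure P] (X : Set E), (∀ᵐ z ∂P, z ∈ X) →
      IsStandardOn P X a b → ∀ n : ℕ, 2 ≤ n →
        ∫⁻ x, ENNReal.ofReal (hausdorffDist X (Set.range x)) ∂Measure.pi (fun _ : Fin n ↦ P) ≤
          ENNReal.ofReal (C * (Real.log n / n) ^ b⁻¹) := by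
  set k : ℝ := 1 + b⁻¹
  refine ⟨2 * (k / a) ^ b⁻¹ + 2 * a⁻¹ ^ b⁻¹ * (2 ^ b / k * Real.log 2 ^ (-k)), ?_⟩
  intro E _ _ _ P _ X hPX hX n hn
  have hn₂ : (2 : ℝ) ≤ n := by exact_mod_cast hn
  have : NeZero n := ⟨by lia⟩
  have hlog : 0 < Real.log n := Real.log_pos (by linarith)
  have htail := exp_neg_mul_log_div_log_div_le (c := b⁻¹) one_lt_two hn₂ (by positivity)
  set L : ℝ := Real.log n / n
  have hmass : a * ((k * L / a) ^ b⁻¹) ^ b = k * L :=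
    mul_div_rpow_inv_rpow ha hb.ne' (by positivity)
  refine (hX.lintegral_hausdorffDist_range_le ha hb hPX (r := (k * L / a) ^ b⁻¹)
    (by positivity)).trans (ENNReal.ofReal_le_ofReal ?_)
  rw [hmass, Fintype.card_fin]
  calc 2 * (k * L / a) ^ b⁻¹ + 2 * a⁻¹ ^ b⁻¹ * (2 ^ b / (k * L) * Real.exp (-(n * (k * L))))
      = 2 * ((k / a) ^ b⁻¹ * L ^ b⁻¹) +
          2 * a⁻¹ ^ b⁻¹ * (2 ^ b / k * (Real.exp (-(n * (k * L))) / L)) := by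
        rw [mul_div_right_comm k L a, Real.mul_rpow (by positivity) (by positivity)]
        field_simp
    _ ≤ 2 * ((k / a) ^ b⁻¹ * L ^ b⁻¹) +
          2 * a⁻¹ ^ b⁻¹ * (2 ^ b / k * (Real.log 2 ^ (-k) * L ^ b⁻¹)) := by gcongr
    _ = (2 * (k / a) ^ b⁻¹ + 2 * a⁻¹ ^ b⁻¹ * (2 ^ b / k * Real.log 2 ^ (-k))) * L ^ b⁻¹ := by ring

/-- Let `a > 0` and `b ≥ 1`. There exists a constant `C`, depending only
on `a` and `b`, such that for every `(a,b)`-standard probability measure `P` on `ℝ^D` with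
compact support `𝒳` and every `n ≥ 2`, if `X_1, …, X_n` are i.i.d. from `P` then
`E[d_H(𝒳, {X_1,…,X_n})] ≤ C (log n / n)^{1/b}`. -/
theorem expected_hausdorff_bound (a b : ℝ) (ha : 0 < a) (hb : 1 ≤ b) :
    ∃ C : ℝ, ∀ (D : ℕ) (P : Measure (EuclideanSpace ℝ (Fin D))),
      IsProbabilityMeasure P →
      ∀ 𝒳 : Set (EuclideanSpace ℝ (Fin D)), IsCompact 𝒳 → 𝒳.Nonempty → P 𝒳 = 1 →
      (∀ x ∈ 𝒳, ∀ t : ℝ, 0 < t →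
        ENNReal.ofReal (min 1 (a * t ^ b)) ≤ P (ball x t)) →
      ∀ n : ℕ, 2 ≤ n →
        (∫⁻ x, ENNReal.ofReal (hausdorffDist 𝒳 (Set.range x))
            ∂(Measure.pi fun _ : Fin n => P)) ≤
          ENNReal.ofReal (C * (Real.log n / n) ^ (1 / b : ℝ)) := by
  obtain ⟨C, hC⟩ := expected_hausdorff_bound_general ha (one_pos.trans_le hb)
  refine ⟨C, fun D P _ 𝒳 h𝒳 _ hP𝒳 hstd n hn ↦ ?_⟩
  rw [one_div]
  exact hC _ P 𝒳 ((mem_ae_iff_prob_eq_one h𝒳.measurableSet).2 hP𝒳) hstd n hn
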